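/- arXiv:2501.11991 — 2 statements merged into one kernel-verified Lean document; each statement's English description precedes it below -/
import Mathlib

section
/- Let k ≥ 2 be an integer and let H_k(x) = Σ_{n≥0} (number of Hertzsprung words in [k]^n) x^n be the generating function of Hertzsprung words over k. Then H_k(x) = (1 - kx/(1+3x) - (2x²/(1+3x)²)·(U_k(σ) - U_{k-1}(σ) - 1)/U_k(σ))^{-1}, where σ = -(1+x)/(2x), valid wherever the right-hand side is defined (x ≠ 0, x ≠ -1/3, U_k(σ) ≠ 0, and the outer expression nonzero). -/
/-- Evaluation of the Chebyshev polynomial of the second kind `U_n` at a real `x`. -/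
noncomputable def chebU (n : ℤ) (x : ℝ) : ℝ := (Polynomial.Chebyshev.U ℝ n).eval x

/-- The statistic `s(w)`: the number of indices `1 ≤ i ≤ n-1` with `|w_{i+1} - w_i| ≤ 1`. -/
def statS {k n : ℕ} (w : Fin n → Fin k) : ℕ :=
  (Finset.univ.filter fun i : Fin (n - 1) =>
    |((w ⟨(i : ℕ) + 1, by have := i.isLt; omega⟩ : ℕ) : ℤ) -
      ((w ⟨(i : ℕ), by have := i.isLt; omega⟩ : ℕ) : ℤ)| ≤ 1).card

/-- A word `w` over `k` is Hertzsprung if `s(w) = 0`. -/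
def IsHertzsprung {k n : ℕ} (w : Fin n → Fin k) : Prop := statS w = 0

open Finset in
lemma hz_iff {k n : ℕ} (w : Fin n → Fin k) : IsHertzsprung w ↔
    ∀ (i : ℕ) (h : i + 1 < n), ¬ |((w ⟨i + 1, h⟩ : ℕ) : ℤ) - ((w ⟨i, by omega⟩ : ℕ) : ℤ)| ≤ 1 := by
  unfold IsHertzsprung statS
  rw [Finset.card_eq_zero, Finset.filter_eq_empty_iff]
  constructor
  · intro H i h
    exact H (x := ⟨i, by omega⟩) (Finset.mem_univ _)
  · intro H i _
    exact H i (by have := i.isLt; omega)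

/-- Closeness of two letters. -/
def nearL {k : ℕ} (u v : Fin k) : Prop := |((u : ℕ) : ℤ) - ((v : ℕ) : ℤ)| ≤ 1

lemma nearL_comm {k : ℕ} (u v : Fin k) : nearL u v ↔ nearL v u := by
  unfold nearL
  rw [abs_sub_comm]

lemma hz_cons {k n : ℕ} (v u : Fin k) (w : Fin n → Fin k) :
    IsHertzsprung (Fin.cons v (Fin.cons u w : Fin (n + 1) → Fin k) : Fin (n + 2) → Fin k) ↔
      ¬ nearL u v ∧ IsHertzsprung (Fin.cons u w : Fin (n + 1) → Fin k) := by
  generalize hW : (Fin.cons u w : Fin (n + 1) → Fin k) = W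
  have hu : W ⟨0, by omega⟩ = u := by rw [← hW]; rfl
  have e0 : (Fin.cons v W : Fin (n + 2) → Fin k) ⟨0, by omega⟩ = v := rfl
  have e1 : ∀ (i : ℕ) (h : i + 1 < n + 2),
      (Fin.cons v W : Fin (n + 2) → Fin k) ⟨i + 1, h⟩ = W ⟨i, by omega⟩ :=
    fun i h => Fin.cons_succ (α := fun _ => Fin k) v W ⟨i, by omega⟩
  generalize (Fin.cons v W : Fin (n + 2) → Fin k) = V at e0 e1
  rw [hz_iff, hz_iff]
  unfold nearL
  constructor
  · intro H
    refine ⟨?_, fun i h => ?_⟩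
    · have := H 0 (by omega)
      rwa [e1, e0, hu] at this
    · have := H (i + 1) (by omega)
      rwa [e1, e1] at this
  · rintro ⟨h0, H⟩ i h
    cases i with
    | zero => rw [e1, e0, hu]; exact h0
    | succ i => rw [e1, e1]; exact H i (by omega)

open Classical in
/-- Number of Hertzsprung words of length `n + 1` starting with `v`. -/
noncomputable def cntP (k n : ℕ) (v : Fin k) : ℝ :=
  ∑ w : Fin n → Fin k, if IsHertzsprung (Fin.cons v w : Fin (n + 1) → Fin k) then 1 else 0

lemma cntP_zero (k : ℕ) (v : Fin k) : cntP k 0 v = 1 := by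
  unfold cntP
  have : ∀ w : Fin 0 → Fin k, IsHertzsprung (Fin.cons v w : Fin (0 + 1) → Fin k) := by
    intro w
    rw [hz_iff]
    intro i h
    omega
  simp [this]

lemma sum_cons {k n : ℕ} (F : (Fin (n + 1) → Fin k) → ℝ) :
    ∑ w, F w = ∑ v : Fin k, ∑ w : Fin n → Fin k, F (Fin.cons v w) := by
  rw [← (Fin.consEquiv (fun _ : Fin (n + 1) => Fin k)).sum_comp, Fintype.sum_prod_type]
  rfl

open Classical in
lemma cntP_succ (k n : ℕ) (v : Fin k) :
    cntP k (n + 1) v = ∑ u : Fin k, if nearL u v then 0 else cntP k n u := by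
  unfold cntP
  rw [sum_cons]
  refine Finset.sum_congr rfl fun u _ => ?_
  simp only [hz_cons]
  by_cases h : nearL u v <;> simp [h]

lemma cntP_bound (k n : ℕ) (v : Fin k) : 0 ≤ cntP k n v ∧ cntP k n v ≤ (k : ℝ) ^ n := by
  classical
  unfold cntP
  refine ⟨Finset.sum_nonneg fun w _ => by split_ifs <;> norm_num, ?_⟩
  calc _ ≤ ∑ w : Fin n → Fin k, (1 : ℝ) :=
        Finset.sum_le_sum fun w _ => by split_ifs <;> norm_num
    _ = _ := by simp

lemma card_zero (k : ℕ) :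
    (Nat.card {w : Fin 0 → Fin k | IsHertzsprung w} : ℝ) = 1 := by
  have : {w : Fin 0 → Fin k | IsHertzsprung w} = Set.univ := by
    ext w
    simp only [Set.mem_ofPred_eq, Set.mem_univ, iff_true]
    rw [hz_iff]
    intro i h
    omega
  rw [this]
  simp

lemma card_succ (k n : ℕ) :
    (Nat.card {w : Fin (n + 1) → Fin k | IsHertzsprung w} : ℝ) = ∑ v, cntP k n v := by
  classical
  unfold cntP
  rw [← sum_cons (fun w => if IsHertzsprung w then (1 : ℝ) else 0)]
  rw [Finset.sum_boole]
  congr 1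
  rw [← Fintype.card_subtype, ← Nat.card_eq_fintype_card]
  rfl

open Classical in
lemma near_sum (k : ℕ) (G : ℕ → ℝ) (h0 : G 0 = 0) (hk : G (k + 1) = 0) (u : Fin k) :
    ∑ v : Fin k, (if nearL u v then G (v + 1) else 0) = G u + G (u + 1) + G (u + 2) := by
  have e1 : ∑ v : Fin k, (if nearL u v then G (v + 1) else 0) =
      ∑ j ∈ Finset.range (k + 2), if j = (u : ℕ) ∨ j = u + 1 ∨ j = u + 2 then G j else 0 := by
    rw [Finset.sum_range_succ, hk, Finset.sum_range_succ', h0, Finset.sum_range]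
    simp only [ite_self, add_zero]
    refine Finset.sum_congr rfl fun v _ => ?_
    refine if_congr ?_ rfl rfl
    unfold nearL
    rw [abs_le]
    omega
  rw [e1, ← Finset.sum_filter]
  have e2 : (Finset.range (k + 2)).filter (fun j => j = (u : ℕ) ∨ j = u + 1 ∨ j = u + 2)
      = {(u : ℕ), (u : ℕ) + 1, (u : ℕ) + 2} := by
    ext j
    simp only [Finset.mem_filter, Finset.mem_range, Finset.mem_insert, Finset.mem_singleton]
    have := u.isLt
    omega
  rw [e2, Finset.sum_insert (by simp), Finset.sum_insert (by simp), Finset.sum_singleton]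
  ring

lemma chebU_rec (n : ℤ) (s : ℝ) : chebU (n + 1) s = 2 * s * chebU n s - chebU (n - 1) s := by
  unfold chebU
  rw [Polynomial.Chebyshev.U_add_one]
  simp

lemma chebU_sum (s : ℝ) (k : ℕ) : (2 * s - 2) * ∑ i ∈ Finset.range k, chebU (i : ℤ) s =
    chebU k s - chebU ((k : ℤ) - 1) s - 1 := by
  induction k with
  | zero => simp [chebU]
  | succ k ih =>
    rw [Finset.sum_range_succ, mul_add, ih]
    push_cast
    rw [chebU_rec, add_sub_cancel_right]
    ring

/-- The solution of the tridiagonal system. -/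
noncomputable def solG (k : ℕ) (x s : ℝ) (i : ℕ) : ℝ :=
  (1 - (chebU ((i : ℤ) - 1) s + chebU ((k : ℤ) - i) s) / chebU k s) / (1 + 3 * x)

lemma solG_zero (k : ℕ) (x s : ℝ) (h : chebU k s ≠ 0) : solG k x s 0 = 0 := by
  have : chebU (-1) s = 0 := by simp [chebU]
  simp [solG, this, h]

lemma solG_last (k : ℕ) (x s : ℝ) (h : chebU k s ≠ 0) : solG k x s (k + 1) = 0 := by
  have : chebU (-1) s = 0 := by simp [chebU]
  simp [solG, this, h]

lemma solG_rec (k : ℕ) (x s : ℝ) (h : chebU k s ≠ 0) (h3 : 1 + 3 * x ≠ 0)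
    (hs : 2 * s * x = -(1 + x)) (i : ℕ) :
    solG k x s (i + 1) + x * (solG k x s i + solG k x s (i + 1) + solG k x s (i + 2)) = 1 := by
  have r1 := chebU_rec (i : ℤ) s
  have r2 := chebU_rec ((k : ℤ) - i - 1) s
  have a1 : (k : ℤ) - i - 1 + 1 = k - i := by ring
  have a2 : (k : ℤ) - i - 1 - 1 = k - (i + 2) := by ring
  have a3 : (k : ℤ) - (i + 1) = k - i - 1 := by ring
  have a4 : (i : ℤ) + 2 - 1 = i + 1 := by ring
  rw [a1, a2] at r2
  unfold solG
  push_cast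
  rw [a3, a4, add_sub_cancel_right, r1, r2]
  field_simp
  linear_combination (-(chebU (i : ℤ) s + chebU ((k : ℤ) - i - 1) s)) * hs

lemma solG_sum (k : ℕ) (x s : ℝ) (h : chebU k s ≠ 0) (h3 : 1 + 3 * x ≠ 0)
    (hs : 2 * s * x = -(1 + x)) :
    x * ∑ v : Fin k, solG k x s (v + 1) = k * x / (1 + 3 * x) +
          2 * x ^ 2 / (1 + 3 * x) ^ 2 * ((chebU k s - chebU ((k : ℤ) - 1) s - 1) / chebU k s) := by
  rw [← chebU_sum]
  have e : ∑ v : Fin k, solG k x s (v + 1) =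
      (k - 2 * (∑ i ∈ Finset.range k, chebU (i : ℤ) s) / chebU k s) / (1 + 3 * x) := by
    unfold solG
    rw [← Finset.sum_div, Finset.sum_sub_distrib, ← Finset.sum_div, Finset.sum_add_distrib,
      ← Finset.sum_range (fun i : ℕ => chebU (((i + 1 : ℕ) : ℤ) - 1) s),
      ← Finset.sum_range (fun i : ℕ => chebU ((k : ℤ) - ((i + 1 : ℕ) : ℤ)) s)]
    have r : ∑ i ∈ Finset.range k, chebU ((k : ℤ) - ((i + 1 : ℕ) : ℤ)) s =
        ∑ i ∈ Finset.range k, chebU (i : ℤ) s := by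
      rw [← Finset.sum_range_reflect (fun i : ℕ => chebU (i : ℤ) s)]
      refine Finset.sum_congr rfl fun i hi => ?_
      have := Finset.mem_range.1 hi
      congr 1
      omega
    rw [r]
    simp
    ring
  rw [e]
  generalize ∑ i ∈ Finset.range k, chebU (i : ℤ) s = T
  have hq : x * (2 * s - 2) = -(1 + 3 * x) := by linear_combination hs
  have hq2 : 2 * x ^ 2 / (1 + 3 * x) ^ 2 * ((2 * s - 2) * T / chebU k s) =
      2 * x / (1 + 3 * x) ^ 2 * ((x * (2 * s - 2)) * T / chebU k s) := by ring
  rw [hq2, hq]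
  field_simp
  ring

/-- The generating function `H_k(x) = Σ_{n≥0} (#Hertzsprung words in [k]^n) xⁿ` equals
`(1 - kx/(1+3x) - (2x²/(1+3x)²)·(U_k(σ) - U_{k-1}(σ) - 1)/U_k(σ))⁻¹` with `σ = -(1+x)/(2x)`,
wherever the right-hand side is defined (for sufficiently small `x`). -/
theorem gf_of_hertzsprung_words (k : ℕ) (hk : 2 ≤ k) :
    ∃ ε > 0, ∀ x : ℝ, |x| < ε →
      x ≠ 0 →
      x ≠ -(1 / 3) →
      chebU (k : ℤ) (-((1 + x) / (2 * x))) ≠ 0 →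
      1 - k * x / (1 + 3 * x) -
          2 * x ^ 2 / (1 + 3 * x) ^ 2 *
            ((chebU (k : ℤ) (-((1 + x) / (2 * x))) -
                chebU ((k : ℤ) - 1) (-((1 + x) / (2 * x))) - 1) /
              chebU (k : ℤ) (-((1 + x) / (2 * x)))) ≠ 0 →
      ∑' n : ℕ, (Nat.card {w : Fin n → Fin k | IsHertzsprung w} : ℝ) * x ^ n =
        (1 - k * x / (1 + 3 * x) -
            2 * x ^ 2 / (1 + 3 * x) ^ 2 *
              ((chebU (k : ℤ) (-((1 + x) / (2 * x))) -
                  chebU ((k : ℤ) - 1) (-((1 + x) / (2 * x))) - 1) /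
                chebU (k : ℤ) (-((1 + x) / (2 * x)))))⁻¹ := by
  classical
  refine ⟨1 / (k + 1), by positivity, fun x hx hx0 hx3 hU hD => ?_⟩
  set s : ℝ := -((1 + x) / (2 * x)) with hsdef
  have hs : 2 * s * x = -(1 + x) := by rw [hsdef]; field_simp
  have h3 : 1 + 3 * x ≠ 0 := fun h => hx3 (by linarith)
  have hr : (k : ℝ) * |x| < 1 := by
    rw [lt_div_iff₀ (by positivity)] at hx
    nlinarith [abs_nonneg x]
  have hsum : ∀ v : Fin k, Summable fun n => cntP k n v * x ^ n := by
    intro v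
    refine Summable.of_norm_bounded (summable_geometric_of_lt_one (by positivity) hr) fun n => ?_
    rw [norm_mul, norm_pow, Real.norm_eq_abs, Real.norm_eq_abs, mul_pow,
      abs_of_nonneg (cntP_bound k n v).1]
    exact mul_le_mul_of_nonneg_right (cntP_bound k n v).2 (by positivity)
  set f : Fin k → ℝ := fun v => ∑' n, cntP k n v * x ^ n with hf
  set S := ∑ v, f v with hS
  set t := ∑ v : Fin k, solG k x s (v + 1) with ht
  have hfrec : ∀ v, f v = 1 + x * ∑ u, if nearL u v then 0 else f u := by
    intro v
    have e : ∀ n, cntP k (n + 1) v * x ^ (n + 1) =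
        x * ∑ u, if nearL u v then 0 else cntP k n u * x ^ n := by
      intro n
      rw [cntP_succ, Finset.sum_mul, Finset.mul_sum]
      refine Finset.sum_congr rfl fun u _ => ?_
      split_ifs
      · simp
      · ring
    rw [hf]
    simp only
    rw [(hsum v).tsum_eq_zero_add, cntP_zero]
    simp only [e]
    rw [tsum_mul_left, Summable.tsum_finsetSum]
    · simp only [pow_zero, mul_one]
      congr 2
      refine Finset.sum_congr rfl fun u _ => ?_
      split_ifs
      · simp
      · rfl
    · intro u _
      split_ifs
      · exact summable_zero
      · exact hsum u
  have hfrec2 : ∀ v, f v + x * ∑ u, (if nearL u v then f u else 0) = 1 + x * S := by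
    intro v
    have : S = (∑ u, if nearL u v then 0 else f u) + ∑ u, (if nearL u v then f u else 0) := by
      rw [← Finset.sum_add_distrib]
      refine Finset.sum_congr rfl fun u _ => ?_
      split_ifs <;> simp
    rw [this, hfrec v]
    ring
  have hg : ∀ u : Fin k, solG k x s (u + 1) +
      x * ∑ v : Fin k, (if nearL u v then solG k x s (v + 1) else 0) = 1 := by
    intro u
    rw [near_sum k _ (solG_zero k x s hU) (solG_last k x s hU)]
    exact solG_rec k x s hU h3 hs u
  have key : S = (1 + x * S) * t := by
    calc S = ∑ u, f u * (solG k x s (u + 1) +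
        x * ∑ v : Fin k, (if nearL u v then solG k x s (v + 1) else 0)) := by
          simp only [hg, mul_one]; exact hS
      _ = ∑ v : Fin k, solG k x s (v + 1) * (f v + x * ∑ u, (if nearL u v then f u else 0)) := by
          simp only [mul_add, Finset.sum_add_distrib, Finset.mul_sum]
          congr 1
          · exact Finset.sum_congr rfl fun u _ => mul_comm _ _
          · rw [Finset.sum_comm]
            refine Finset.sum_congr rfl fun u _ => Finset.sum_congr rfl fun v _ => ?_
            split_ifs
            · ring
            · simp
      _ = (1 + x * S) * t := by
          simp only [hfrec2]
          rw [← Finset.sum_mul, mul_comm]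
  have hc : ∀ n, (Nat.card {w : Fin (n + 1) → Fin k | IsHertzsprung w} : ℝ) * x ^ (n + 1) =
      x * ∑ v, cntP k n v * x ^ n := by
    intro n
    rw [card_succ, ← Finset.sum_mul]
    ring
  have hS2 : Summable fun n => ∑ v, cntP k n v * x ^ n := summable_sum fun v _ => hsum v
  have hH : ∑' n : ℕ, (Nat.card {w : Fin n → Fin k | IsHertzsprung w} : ℝ) * x ^ n = 1 + x * S := by
    have hs1 : Summable fun n : ℕ =>
        (Nat.card {w : Fin n → Fin k | IsHertzsprung w} : ℝ) * x ^ n := by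
      rw [← summable_nat_add_iff 1]
      simp only [hc]
      exact hS2.mul_left x
    rw [hs1.tsum_eq_zero_add, card_zero]
    simp only [hc]
    rw [tsum_mul_left, Summable.tsum_finsetSum fun v _ => hsum v]
    simp [hS, hf]
  have ht2 := solG_sum k x s hU h3 hs
  rw [hH]
  rw [sub_sub, ← ht2] at hD ⊢
  apply eq_inv_of_mul_eq_one_left
  linear_combination x * key
end

section
/- For every integer k ≥ 1 and every real number x with x² ≠ 1, T_2(x) ≠ 1, and T_4(x) ≠ 1: Σ_{i=1}^{k} U_i(x)·U_{i-1}(x)·U_{k-i}(x)·U_{k-i-1}(x) = ((4(k-1)x² - 2k + 3)·U_{2k}(x) - (2k-1)·x·U_{2k-1}(x) + 4(k+1)x²)/(16(x² - 1)²) - (Z_{k+1}(T_2(x)) - Z_{k-1}(T_2(x)))/(4(x² - 1)²) + T_{2k}(x)·(Z_{k+1}(T_4(x)) - Z_{k-1}(T_4(x)))/(16(x² - 1)²) + (1 - T_2(x)²)·T_2(x)·U_{k-1}(T_2(x))·Z_k(T_4(x))/(4(x² - 1)²). -/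
/-- Evaluation of the Chebyshev polynomial of the first kind `T_n` at a real `x`
(indices extended to all integers via the Chebyshev recurrence). -/
noncomputable def chebT (n : ℤ) (x : ℝ) : ℝ := (Polynomial.Chebyshev.T ℝ n).eval x

/-- `Z_n(x) = (U_n(x) - U_{n-1}(x) - 1)/(2(x - 1))`. -/
noncomputable def Zc (n : ℤ) (x : ℝ) : ℝ := (chebU n x - chebU (n - 1) x - 1) / (2 * (x - 1))

theorem cU_rec (n : ℤ) (x : ℝ) : chebU (n + 1) x = 2 * x * chebU n x - chebU (n - 1) x := by
  simp [chebU, Polynomial.Chebyshev.U_add_one ℝ n]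

theorem cU_zero (x : ℝ) : chebU 0 x = 1 := by simp [chebU]

theorem cU_neg_one (x : ℝ) : chebU (-1) x = 0 := by simp [chebU]

theorem cU_one (x : ℝ) : chebU 1 x = 2 * x := by simp [chebU]

theorem cT_eq (n : ℤ) (x : ℝ) : chebT n x = chebU n x - x * chebU (n - 1) x := by
  simp [chebU, chebT, Polynomial.Chebyshev.T_eq_U_sub_X_mul_U ℝ n]

theorem cT_two (x : ℝ) : chebT 2 x = 2 * x ^ 2 - 1 := by
  simp [chebT, Polynomial.Chebyshev.T_two]

theorem cT_mul (m n : ℤ) (x : ℝ) : chebT (m * n) x = chebT m (chebT n x) := by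
  simp [chebT, Polynomial.Chebyshev.T_mul]

theorem cT_four (x : ℝ) : chebT 4 x = 2 * chebT 2 x ^ 2 - 1 := by
  rw [show (4 : ℤ) = 2 * 2 by norm_num, cT_mul, cT_two]

/-- Two sequences with the same second-order recurrence agree if they agree twice. -/
theorem rec_unique (c : ℝ) (f g : ℤ → ℝ) (hf : ∀ n, f (n + 1) = c * f n - f (n - 1))
    (hg : ∀ n, g (n + 1) = c * g n - g (n - 1)) (h0 : f 0 = g 0) (h1 : f (-1) = g (-1)) :
    ∀ n, f n = g n := by
  have key : ∀ n, f n = g n ∧ f (n - 1) = g (n - 1) := by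
    intro n
    induction n using Int.induction_on with
    | zero => exact ⟨h0, by simpa using h1⟩
    | succ i ih =>
      refine ⟨by rw [hf, hg, ih.1, ih.2], by simpa using ih.1⟩
    | pred i ih =>
      refine ⟨ih.2, ?_⟩
      have a := hf (-(i : ℤ) - 1)
      have b := hg (-(i : ℤ) - 1)
      rw [sub_add_cancel] at a b
      rw [ih.1] at a
      rw [ih.2] at a
      linarith
  exact fun n => (key n).1

theorem cU_add (m n : ℤ) (x : ℝ) :
    chebU (m + n) x = chebU m x * chebU n x - chebU (m - 1) x * chebU (n - 1) x := by
  refine rec_unique (2 * x) (fun n => chebU (m + n) x)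
    (fun n => chebU m x * chebU n x - chebU (m - 1) x * chebU (n - 1) x) ?_ ?_ ?_ ?_ n
  · intro n
    have := cU_rec (m + n) x
    simp only [add_assoc, add_sub_assoc] at this ⊢
    exact this
  · intro n
    have h1 := cU_rec n x
    have h2 := cU_rec (n - 1) x
    simp only [sub_add_cancel] at h2
    simp only [add_sub_cancel_right]
    rw [h1]
    linear_combination (-chebU (m - 1) x) * h2
  · simp [cU_zero, cU_neg_one]
  · have h := cU_rec (-1) x
    norm_num [cU_zero, cU_neg_one] at h
    have h2 : chebU (-2) x = -1 := by linarith
    norm_num [cU_neg_one, h2]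
    rfl

theorem cU_comp_two (n : ℤ) (x : ℝ) : chebU n (chebT 2 x) * (2 * x) = chebU (2 * n + 1) x := by
  refine rec_unique (2 * chebT 2 x) (fun n => chebU n (chebT 2 x) * (2 * x))
    (fun n => chebU (2 * n + 1) x) ?_ ?_ ?_ ?_ n
  · intro n
    simp only [cU_rec n]
    ring
  · intro n
    have h1 := cU_rec (2 * n + 2) x
    have h2 := cU_rec (2 * n + 1) x
    have h3 := cU_rec (2 * n) x
    ring_nf at h1 h2 h3 ⊢
    rw [cT_two]
    linear_combination h1 + 2 * x * h2 + h3
  · simp [cU_zero, cU_one]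
  · simp [cU_neg_one]

theorem pell (n : ℤ) (x : ℝ) :
    chebU n x ^ 2 - 2 * x * chebU n x * chebU (n - 1) x + chebU (n - 1) x ^ 2 = 1 := by
  induction n using Int.induction_on with
  | zero => simp [cU_zero, cU_neg_one]
  | succ i ih =>
    rw [cU_rec, add_sub_cancel_right]
    linear_combination ih
  | pred i ih =>
    have h := cU_rec (-(i : ℤ) - 1) x
    rw [sub_add_cancel] at h
    rw [h] at ih
    linear_combination ih

/-- `2 (1 - x²) U_i U_{i-1} = x - T_{2i+1}`. -/
theorem prod_eq (i : ℤ) (x : ℝ) :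
    2 * (1 - x ^ 2) * (chebU i x * chebU (i - 1) x) = x - chebT (2 * i + 1) x := by
  have h1 := cU_add i (i + 1) x
  have h2 := cU_add i i x
  have h3 := cT_eq (2 * i + 1) x
  rw [add_sub_cancel_right] at h1 h3
  rw [cU_rec] at h1
  rw [show i + (i + 1) = 2 * i + 1 by ring] at h1
  rw [show i + i = 2 * i by ring] at h2
  rw [h3, h1, h2]
  linear_combination x * pell i x

theorem two_cT (n : ℤ) (x : ℝ) : 2 * chebT n x = chebU n x - chebU (n - 2) x := by
  have h := cU_rec (n - 1) x
  rw [cT_eq]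
  rw [sub_add_cancel, show n - 1 - 1 = n - 2 by ring] at h
  linear_combination h

theorem two_cT_mul (m n : ℤ) (x : ℝ) :
    2 * (chebT m x * chebT n x) = chebT (m + n) x + chebT (m - n) x := by
  have := congrArg (Polynomial.eval x) (Polynomial.Chebyshev.T_mul_T ℝ m n)
  simp only [Polynomial.eval_mul, Polynomial.eval_add, Polynomial.eval_ofNat] at this
  simp only [chebT]
  linarith

theorem telescope (f g : ℤ → ℝ) (h : ∀ i, f i = g i - g (i - 1)) (k : ℕ) :
    ∑ i ∈ Finset.Icc (1 : ℤ) (k : ℤ), f i = g k - g 0 := by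
  induction k with
  | zero => simp
  | succ n ih =>
    have : Finset.Icc (1 : ℤ) ((n + 1 : ℕ) : ℤ)
        = insert ((n : ℤ) + 1) (Finset.Icc (1 : ℤ) (n : ℤ)) := by
      ext a
      simp only [Finset.mem_Icc, Finset.mem_insert, Nat.cast_add, Nat.cast_one]
      omega
    rw [this, Finset.sum_insert (by simp), ih, h]
    push_cast
    rw [add_sub_cancel_right]
    ring

theorem four_T (n : ℤ) (x : ℝ) :
    2 * (2 * x) * chebT n x = chebU (n + 1) x - chebU (n - 3) x := by
  have h1 := cU_rec n x
  have h2 := cU_rec (n - 2) x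
  have h3 := two_cT n x
  rw [show n - 2 + 1 = n - 1 by ring, show n - 2 - 1 = n - 3 by ring] at h2
  linear_combination 2 * x * h3 - h1 + h2

theorem lhs_sum (k : ℕ) (x : ℝ) :
    32 * x * (x ^ 2 - 1) ^ 2 * ∑ i ∈ Finset.Icc (1 : ℤ) (k : ℤ),
        chebU i x * chebU (i - 1) x * chebU ((k : ℤ) - i) x * chebU ((k : ℤ) - i - 1) x =
      8 * x * (k * x ^ 2 - x / 2 * (chebU (2 * k + 1) x - 2 * x) - x / 2 * chebU (2 * k - 1) x
        + k / 2 * chebT (2 * k + 2) x) + chebU (2 * k + 1) x - chebU (1 - 2 * k) x := by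
  rw [Finset.mul_sum, telescope _ (fun i : ℤ => 8 * x * (i * x ^ 2 - x / 2 * chebU (2 * i + 1) x
    + x / 2 * chebU (2 * k - 2 * i - 1) x + i / 2 * chebT (2 * k + 2) x)
      + chebU (4 * i - 2 * k + 1) x)]
  · simp only [Int.cast_natCast, Int.cast_zero]
    rw [show 2 * (k : ℤ) - 2 * k - 1 = -1 by ring, show 4 * (k : ℤ) - 2 * k + 1 = 2 * k + 1 by ring,
      show 4 * (0 : ℤ) - 2 * k + 1 = 1 - 2 * k by ring,
      show 2 * (k : ℤ) - 2 * 0 - 1 = 2 * k - 1 by ring, show 2 * (0 : ℤ) + 1 = 1 by ring,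
      cU_neg_one, cU_one]
    ring
  · intro i
    have h1 := prod_eq i x
    have h2 := prod_eq (k - i) x
    have h3 := two_cT (2 * i + 1) x
    have h4 := two_cT (2 * (k - i) + 1) x
    have h5 := two_cT_mul (2 * i + 1) (2 * (k - i) + 1) x
    have h6 := four_T (4 * i - 2 * k) x
    push_cast
    rw [show 4 * (i - 1) - 2 * (k : ℤ) + 1 = 4 * i - 2 * k - 3 by ring,
      show 2 * (i - 1) + 1 = 2 * i + 1 - 2 by ring,
      show 2 * (k : ℤ) - 2 * (i - 1) - 1 = 2 * (k - i) + 1 by ring,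
      show 2 * (k : ℤ) - 2 * i - 1 = 2 * (k - i) + 1 - 2 by ring]
    rw [show 2 * i + 1 + (2 * ((k : ℤ) - i) + 1) = 2 * k + 2 by ring,
      show 2 * i + 1 - (2 * ((k : ℤ) - i) + 1) = 4 * i - 2 * k by ring] at h5
    have h7 : 32 * x * (x ^ 2 - 1) ^ 2 * (chebU i x * chebU (i - 1) x * chebU ((k : ℤ) - i) x
        * chebU ((k : ℤ) - i - 1) x) = 8 * x * ((2 * (1 - x ^ 2) * (chebU i x * chebU (i - 1) x))
        * (2 * (1 - x ^ 2) * (chebU ((k : ℤ) - i) x * chebU ((k : ℤ) - i - 1) x))) := by ring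
    rw [h7, h1, h2]
    linear_combination 4 * x * h5 + h6 - 4 * x ^ 2 * h3 - 4 * x ^ 2 * h4

/-- `Σ_{i=1}^{k} U_i(x)·U_{i-1}(x)·U_{k-i}(x)·U_{k-i-1}(x)` in closed form (identity `q₁₈`). -/
theorem sum_q18 (k : ℕ) (hk : 1 ≤ k) (x : ℝ) (hx : x ^ 2 ≠ 1)
    (hT2 : chebT 2 x ≠ 1) (hT4 : chebT 4 x ≠ 1) :
    ∑ i ∈ Finset.Icc (1 : ℤ) (k : ℤ),
        chebU i x * chebU (i - 1) x * chebU ((k : ℤ) - i) x * chebU ((k : ℤ) - i - 1) x =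
      ((4 * (k - 1) * x ^ 2 - 2 * k + 3) * chebU (2 * (k : ℤ)) x -
          (2 * k - 1) * x * chebU (2 * (k : ℤ) - 1) x + 4 * (k + 1) * x ^ 2) /
        (16 * (x ^ 2 - 1) ^ 2) -
      (Zc ((k : ℤ) + 1) (chebT 2 x) - Zc ((k : ℤ) - 1) (chebT 2 x)) / (4 * (x ^ 2 - 1) ^ 2) +
      chebT (2 * (k : ℤ)) x * (Zc ((k : ℤ) + 1) (chebT 4 x) - Zc ((k : ℤ) - 1) (chebT 4 x)) /
        (16 * (x ^ 2 - 1) ^ 2) +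
      (1 - chebT 2 x ^ 2) * chebT 2 x * chebU ((k : ℤ) - 1) (chebT 2 x) *
          Zc (k : ℤ) (chebT 4 x) / (4 * (x ^ 2 - 1) ^ 2) := by
  have ht2 := cT_two x
  have ht4 := cT_four x
  have hx1 : x ^ 2 - 1 ≠ 0 := sub_ne_zero.2 hx
  have hx0 : x ≠ 0 := by
    rintro rfl
    apply hT4
    rw [ht4, ht2]
    norm_num
  set p := chebU (2 * (k : ℤ)) x with hp
  set q := chebU (2 * (k : ℤ) - 1) x with hq
  have hE : p ^ 2 - 2 * x * p * q + q ^ 2 = 1 := pell (2 * (k : ℤ)) x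
  have u1 : chebU (2 * (k : ℤ) + 1) x = 2 * x * p - q := cU_rec _ x
  have u2 : chebU (2 * (k : ℤ) + 2) x = 2 * x * (2 * x * p - q) - p := by
    have := cU_rec (2 * (k : ℤ) + 1) x
    rw [add_sub_cancel_right, u1, ← hp] at this
    rw [← this]
    ring_nf
  have um2 : chebU (2 * (k : ℤ) - 2) x = 2 * x * q - p := by
    have := cU_rec (2 * (k : ℤ) - 1) x
    rw [sub_add_cancel, show 2 * (k : ℤ) - 1 - 1 = 2 * k - 2 by ring, ← hp, ← hq] at this
    linarith
  have um3 : chebU (2 * (k : ℤ) - 3) x = 2 * x * (2 * x * q - p) - q := by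
    have := cU_rec (2 * (k : ℤ) - 2) x
    rw [show 2 * (k : ℤ) - 2 - 1 = 2 * k - 3 by ring,
      show 2 * (k : ℤ) - 2 + 1 = 2 * k - 1 by ring, um2, ← hq] at this
    linarith
  have un : chebU (1 - 2 * (k : ℤ)) x = -(2 * x * (2 * x * q - p) - q) := by
    rw [← um3]
    have := congrArg (Polynomial.eval x) (Polynomial.Chebyshev.U_neg_sub_two ℝ (2 * (k : ℤ) - 3))
    rw [show -(2 * (k : ℤ) - 3) - 2 = 1 - 2 * k by ring] at this
    simpa [chebU] using this
  have tt0 : chebT (2 * (k : ℤ)) x = p - x * q := cT_eq _ x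
  have tt2 : chebT (2 * (k : ℤ) + 2) x = 2 * x * (2 * x * p - q) - p - x * (2 * x * p - q) := by
    rw [cT_eq, show 2 * (k : ℤ) + 2 - 1 = 2 * k + 1 by ring, u2, u1]
  -- differences of Z
  have Zd : ∀ y : ℝ, Zc ((k : ℤ) + 1) y - Zc ((k : ℤ) - 1) y
      = (2 * chebT ((k : ℤ) + 1) y - 2 * chebT (k : ℤ) y) / (2 * (y - 1)) := by
    intro y
    rw [two_cT, two_cT, Zc, Zc, ← sub_div]
    rw [show (k : ℤ) + 1 - 1 = k by ring, show (k : ℤ) + 1 - 2 = k - 1 by ring,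
      show (k : ℤ) - 1 - 1 = k - 2 by ring]
    ring
  have hT22 : chebT 4 x = chebT 2 (chebT 2 x) := by rw [← cT_mul]; norm_num
  have c1 : chebT ((k : ℤ) + 1) (chebT 2 x) = chebT (2 * (k : ℤ) + 2) x := by
    rw [← cT_mul]; ring_nf
  have c2 : chebT (k : ℤ) (chebT 2 x) = chebT (2 * (k : ℤ)) x := by
    rw [← cT_mul]; ring_nf
  have dbl : ∀ n : ℤ, chebT n (chebT 4 x) = 2 * chebT (n * 2) x ^ 2 - 1 := by
    intro n
    rw [← cT_mul, show n * 4 = 2 * (n * 2) by ring, cT_mul, cT_two]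
  have c3 : chebT ((k : ℤ) + 1) (chebT 4 x) = 2 * chebT (2 * (k : ℤ) + 2) x ^ 2 - 1 := by
    rw [dbl]; ring_nf
  have c4 : chebT (k : ℤ) (chebT 4 x) = 2 * chebT (2 * (k : ℤ)) x ^ 2 - 1 := by
    rw [dbl]; ring_nf
  have v1 : chebU ((k : ℤ) - 1) (chebT 2 x) = q / (2 * x) := by
    rw [eq_div_iff (by simpa using hx0), cU_comp_two, hq]; ring_nf
  have w : ∀ n : ℤ, chebU n (chebT 4 x) * (2 * chebT 2 x) * (2 * x) = chebU (4 * n + 3) x := by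
    intro n
    rw [hT22, cU_comp_two, cU_comp_two]; ring_nf
  have w1 : chebT 2 x * (chebU (k : ℤ) (chebT 4 x) - chebU ((k : ℤ) - 1) (chebT 4 x) - 1)
      = (chebU (4 * (k : ℤ) + 3) x - chebU (4 * (k : ℤ) - 1) x - 4 * x * chebT 2 x) / (4 * x) := by
    have a := w k
    have b := w (k - 1)
    rw [show 4 * ((k : ℤ) - 1) + 3 = 4 * k - 1 by ring] at b
    rw [eq_div_iff (by simpa using hx0), ← a, ← b]
    ring
  have w2 : chebU (4 * (k : ℤ) - 1) x = p * q - q * (2 * x * q - p) := by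
    have := cU_add (2 * (k : ℤ)) (2 * k - 1) x
    rw [show 2 * (k : ℤ) + (2 * k - 1) = 4 * k - 1 by ring,
      show 2 * (k : ℤ) - 1 - 1 = 2 * k - 2 by ring, um2] at this
    exact this
  have w3 : chebU (4 * (k : ℤ) + 3) x = (2 * x * (2 * x * p - q) - p) * (2 * x * p - q)
      - (2 * x * p - q) * p := by
    have := cU_add (2 * (k : ℤ) + 2) (2 * k + 1) x
    rw [show 2 * (k : ℤ) + 2 + (2 * k + 1) = 4 * k + 3 by ring,
      show 2 * (k : ℤ) + 2 - 1 = 2 * k + 1 by ring, add_sub_cancel_right, u1, u2] at this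
    exact this
  have last : (1 - chebT 2 x ^ 2) * chebT 2 x * chebU ((k : ℤ) - 1) (chebT 2 x) *
      Zc (k : ℤ) (chebT 4 x) = (1 - chebT 2 x ^ 2) * (q / (2 * x)) *
      ((chebU (4 * (k : ℤ) + 3) x - chebU (4 * (k : ℤ) - 1) x - 4 * x * chebT 2 x) / (4 * x))
      / (2 * (chebT 4 x - 1)) := by
    rw [← w1, v1, Zc]; ring
  have hs := lhs_sum k x
  rw [u1, un, tt2, ← hq] at hs
  rw [Zd, Zd, last, c1, c2, c3, c4, w2, w3, tt0, tt2]
  have e2 : 2 * (chebT 2 x - 1) = 4 * (x ^ 2 - 1) := by rw [ht2]; ring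
  have e4 : 2 * (chebT 4 x - 1) = 16 * x ^ 2 * (x ^ 2 - 1) := by rw [ht4, ht2]; ring
  rw [e2, e4, ht2]
  have hc : 32 * x * (x ^ 2 - 1) ^ 2 ≠ 0 := by positivity
  apply mul_left_cancel₀ hc
  rw [hs]
  clear_value p q
  field_simp
  linear_combination (8192 * x ^ 3 * (x ^ 2 - 1) * q - 16384 * x ^ 4 * (x ^ 2 - 1) * p) * hE
end
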